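/- arXiv:1408.0994 — 2 statements merged into one kernel-verified Lean document; each statement's English description precedes it below -/
import Mathlib

section
/- For every invertible blocked matrix P there exists a decomposition (3) of P whose factors satisfy rank L + r₁ = n (i.e., rank L = n − r₁) and rank R + rank L = max(r₂, n + m − r₁ − r₄). -/
open Module

/-- Rank-nullity for the restriction of a linear map to a subspace. -/
theorem Submodule.finrank_map_add_finrank_inf_ker {K V N : Type*} [Field K] [AddCommGroup V]
    [Module K V] [FiniteDimensional K V] [AddCommGroup N] [Module K N]
    (f : V →ₗ[K] N) (p : Submodule K V) :
    finrank K (p.map f) + finrank K (p ⊓ LinearMap.ker f : Submodule K V) = finrank K p := by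
  have h := (f.domRestrict p).finrank_range_add_finrank_ker
  rwa [LinearMap.range_domRestrict, LinearMap.ker_domRestrict, ← Submodule.finrank_map_subtype_eq,
    Submodule.map_comap_subtype] at h

theorem Submodule.exists_notMem_notMem_of_ne_top {K V : Type*} [Field K] [AddCommGroup V]
    [Module K V] {p q : Submodule K V} (hp : p ≠ ⊤) (hq : q ≠ ⊤) : ∃ x, x ∉ p ∧ x ∉ q := by
  obtain ⟨a, -, ha⟩ := SetLike.exists_of_lt (lt_top_iff_ne_top.2 hp)
  obtain ⟨b, -, hb⟩ := SetLike.exists_of_lt (lt_top_iff_ne_top.2 hq)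
  by_cases haq : a ∈ q
  · by_cases hbp : b ∈ p
    · exact ⟨a + b, fun h => ha ((p.add_mem_iff_left hbp).1 h),
        fun h => hb ((q.add_mem_iff_right haq).1 h)⟩
    · exact ⟨b, hbp, hb⟩
  · exact ⟨a, ha, haq⟩

/-- A subspace `I` has a complement in general position with respect to a subspace `T`. -/
theorem Submodule.exists_isCompl_disjoint_or_codisjoint {K V : Type*} [Field K] [AddCommGroup V]
    [Module K V] [FiniteDimensional K V] (I T : Submodule K V) :
    ∃ W : Submodule K V, IsCompl W I ∧ (Disjoint W T ∨ Codisjoint W T) := by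
  obtain ⟨W, ⟨hWI, hWT⟩, hmax⟩ := exists_maximal_of_wellFoundedGT
    (fun W : Submodule K V => Disjoint W I ∧ Disjoint W T) ⟨⊥, disjoint_bot_left, disjoint_bot_left⟩
  by_cases hI : W ⊔ I = ⊤
  · exact ⟨W, ⟨hWI, codisjoint_iff.2 hI⟩, Or.inl hWT⟩
  by_cases hT : W ⊔ T = ⊤
  · obtain ⟨W', hle, hW'⟩ := hWI.exists_isCompl
    exact ⟨W', hW', Or.inr ((codisjoint_iff.2 hT).mono_left hle)⟩
  exfalso
  obtain ⟨s, hsI, hsT⟩ := exists_notMem_notMem_of_ne_top hI hT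
  have hs : s ≠ 0 := by rintro rfl; exact hsI (zero_mem _)
  have key : ∀ J : Submodule K V, Disjoint W J → s ∉ W ⊔ J → Disjoint (W ⊔ K ∙ s) J := by
    intro J hJ hsJ
    have h1 := (Submodule.disjoint_span_singleton' hs).2 hsJ
    rw [sup_comm]
    exact Disjoint.disjoint_sup_left_of_disjoint_sup_right hJ h1.symm
  have hle := hmax ⟨key I hWI hsI, key T hWT hsT⟩ le_sup_left
  exact hsI (le_sup_left (a := W) (hle (le_sup_right (a := W) (Submodule.mem_span_singleton_self s))))

/-- A linear map into `W` that is injective on `A ⊓ U` can be modified outside `A` so as to become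
injective on `U`, provided `W` is large enough. -/
theorem LinearMap.exists_eqOn_disjoint_ker {K V N : Type*} [Field K] [AddCommGroup V]
    [Module K V] [FiniteDimensional K V] [AddCommGroup N] [Module K N] [FiniteDimensional K N]
    (A U : Submodule K V) (W : Submodule K N) (hUW : finrank K U ≤ finrank K W)
    (f : V →ₗ[K] N) (hf : LinearMap.range f ≤ W) (hfA : Disjoint (A ⊓ U) (LinearMap.ker f)) :
    ∃ l : V →ₗ[K] N, LinearMap.range l ≤ W ∧ (∀ x ∈ A, l x = f x) ∧
      Disjoint U (LinearMap.ker l) := by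
  induction hd : finrank K (U ⊓ LinearMap.ker f : Submodule K V) using Nat.strong_induction_on
    generalizing f with
  | _ d ih =>
    by_cases hbot : U ⊓ LinearMap.ker f = ⊥
    · exact ⟨f, hf, fun _ _ => rfl, disjoint_iff.2 hbot⟩
    obtain ⟨u, hu, hu0⟩ := Submodule.exists_mem_ne_zero_of_ne_bot hbot
    have huA : u ∉ A := fun h =>
      hu0 (Submodule.disjoint_def.1 hfA u ⟨h, hu.1⟩ hu.2)
    have hlt : U.map f < W := by
      refine lt_of_le_of_ne (Submodule.map_le_iff_le_comap.2 fun x _ => hf ⟨x, rfl⟩) ?_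
      intro h
      have h1 := Submodule.finrank_map_add_finrank_inf_ker f U
      have h2 := Submodule.one_le_finrank_iff.2 hbot
      rw [h] at h1
      omega
    obtain ⟨w, hwW, hwU⟩ := SetLike.exists_of_lt hlt
    obtain ⟨φ, hφu, hφA⟩ := Submodule.exists_le_ker_of_notMem huA
    have hgA : ∀ x ∈ A, (f + φ.smulRight w) x = f x := fun x hx => by
      have : φ x = 0 := hφA hx
      simp [this]
    have hker : U ⊓ LinearMap.ker (f + φ.smulRight w) < U ⊓ LinearMap.ker f := by
      have hφ : ∀ x ∈ U, (f + φ.smulRight w) x = 0 → φ x = 0 := by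
        intro x hxU hx
        by_contra hne
        apply hwU
        have hx' : f x + φ x • w = 0 := by simpa using hx
        refine ⟨-(φ x)⁻¹ • x, U.smul_mem _ hxU, ?_⟩
        rw [map_smul, eq_neg_of_add_eq_zero_left hx', smul_neg, neg_smul, neg_neg, smul_smul,
          inv_mul_cancel₀ hne, one_smul]
      rw [SetLike.lt_iff_le_and_exists]
      refine ⟨fun x hx => ⟨hx.1, ?_⟩, u, hu, fun h => hφu (hφ u h.1 h.2)⟩
      have h0 := hφ x hx.1 hx.2
      have h1 : (f + φ.smulRight w) x = 0 := hx.2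
      simpa [h0] using h1
    obtain ⟨l, hl, hlA, hlU⟩ := ih _ (hd ▸ Submodule.finrank_lt_finrank_of_lt hker)
      (f + φ.smulRight w)
      (by
        rintro _ ⟨x, rfl⟩
        exact W.add_mem (hf ⟨x, rfl⟩) (W.smul_mem _ hwW))
      (by
        rw [Submodule.disjoint_def] at hfA ⊢
        intro x hx hx0
        refine hfA x hx ?_
        rw [LinearMap.mem_ker, ← hgA x hx.1]
        exact hx0) rfl
    exact ⟨l, hl, fun x hx => (hlA x hx).trans (hgA x hx), hlU⟩

/-- The linear-map form of the optimal block decomposition: `l` is the lower left block of the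
left factor. -/
theorem LinearMap.exists_optimal_block_shear {K V N : Type*} [Field K] [AddCommGroup V]
    [Module K V] [FiniteDimensional K V] [AddCommGroup N] [Module K N] [FiniteDimensional K N]
    (p₄ : V →ₗ[K] V) (p₃ : N →ₗ[K] V) (p₂ : V →ₗ[K] N) (p₁ : N →ₗ[K] N)
    (hinj : ∀ x y, p₄ x + p₃ y = 0 → p₂ x + p₁ y = 0 → x = 0 ∧ y = 0)
    (hsurj : ∀ z, ∃ x y, p₂ x + p₁ y = z) :
    ∃ l : V →ₗ[K] N, LinearMap.ker (p₁ - l ∘ₗ p₃) = ⊥ ∧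
      finrank K (LinearMap.range l) + finrank K (LinearMap.range p₁) = finrank K N ∧
      finrank K (LinearMap.range (p₂ - l ∘ₗ p₄)) + finrank K (LinearMap.range l) =
        max (finrank K (LinearMap.range p₂))
          (finrank K N + finrank K V - finrank K (LinearMap.range p₁) -
            finrank K (LinearMap.range p₄)) := by
  obtain ⟨W, hWE, hWT⟩ := Submodule.exists_isCompl_disjoint_or_codisjoint
    ((LinearMap.range p₁).comap p₂) (LinearMap.ker p₂ ⊔ LinearMap.ker p₄)
  have h24 : Disjoint (LinearMap.ker p₂) (LinearMap.ker p₄) := by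
    rw [Submodule.disjoint_def]
    intro x h2 h4
    exact (hinj x 0 (by simpa using h4) (by simpa using h2)).1
  have hW2 : Disjoint W (LinearMap.ker p₂) := hWE.disjoint.mono_right (fun x hx => by
    have : p₂ x = 0 := hx
    simp [this])
  have hWcompl : IsCompl (W.map p₂) (LinearMap.range p₁) := by
    refine ⟨?_, ?_⟩
    · rw [Submodule.disjoint_def]
      rintro _ ⟨w, hw, rfl⟩ hr
      rw [Submodule.disjoint_def.1 hWE.disjoint w hw hr, map_zero]
    · rw [codisjoint_iff, eq_top_iff]
      rintro z -
      obtain ⟨x, y, rfl⟩ := hsurj z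
      obtain ⟨w, hw, e, he, rfl⟩ := Submodule.mem_sup.1
        (show x ∈ W ⊔ (LinearMap.range p₁).comap p₂ from hWE.sup_eq_top ▸ Submodule.mem_top)
      rw [map_add, add_assoc]
      exact Submodule.add_mem_sup ⟨w, hw, rfl⟩ (Submodule.add_mem _ he ⟨y, rfl⟩)
  have hWfin := Submodule.finrank_add_eq_of_isCompl hWcompl
  have hWmap := Submodule.finrank_map_add_finrank_inf_ker p₂ W
  rw [hW2.eq_bot, finrank_bot] at hWmap
  have hF := Submodule.finrank_sup_add_finrank_inf_eq W (LinearMap.ker p₂)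
  rw [hW2.eq_bot, finrank_bot] at hF
  have hr1 := p₁.finrank_range_add_finrank_ker
  have hr2 := p₂.finrank_range_add_finrank_ker
  have hr4 := p₄.finrank_range_add_finrank_ker
  obtain ⟨G, hGF, hG4, hGfin⟩ : ∃ G ≤ W ⊔ LinearMap.ker p₂, Disjoint G (LinearMap.ker p₄) ∧
      (finrank K G = finrank K (W ⊔ LinearMap.ker p₂ : Submodule K V) ∨
        finrank K G = finrank K (LinearMap.range p₄)) := by
    rcases hWT with h | h
    · exact ⟨_, le_rfl, Disjoint.disjoint_sup_left_of_disjoint_sup_right h24 h, Or.inl rfl⟩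
    · have h' : Codisjoint (W ⊔ LinearMap.ker p₂) (LinearMap.ker p₄) := by
        rw [codisjoint_iff, sup_assoc]
        exact h.eq_top
      obtain ⟨G, hG, hGc⟩ := h'.exists_isCompl
      have := Submodule.finrank_add_eq_of_isCompl hGc
      exact ⟨G, hG, hGc.disjoint, Or.inr (by omega)⟩
  have hGW : ∀ x ∈ G, p₂ x ∈ W.map p₂ := by
    intro x hx
    obtain ⟨w, hw, e, he, rfl⟩ := Submodule.mem_sup.1 (hGF hx)
    have he' : p₂ e = 0 := he
    exact ⟨w, hw, by simp [he']⟩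
  obtain ⟨g, hg⟩ := (p₄ ∘ₗ G.subtype).exists_leftInverse_of_injective (by
    rw [LinearMap.ker_comp, ← Submodule.disjoint_iff_comap_eq_bot]
    exact hG4)
  have hf : ∀ x ∈ G, (p₂ ∘ₗ G.subtype ∘ₗ g) (p₄ x) = p₂ x := by
    intro x hx
    have := LinearMap.congr_fun hg ⟨x, hx⟩
    simp only [LinearMap.comp_apply, Submodule.subtype_apply, LinearMap.id_apply] at this
    simp [this]
  have h31 : LinearMap.ker p₁ ⊓ LinearMap.ker p₃ = ⊥ := by
    rw [← disjoint_iff, Submodule.disjoint_def]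
    intro y h1 h3
    exact (hinj 0 y (by simpa using h3) (by simpa using h1)).2
  have hU := Submodule.finrank_map_add_finrank_inf_ker p₃ (LinearMap.ker p₁)
  rw [h31, finrank_bot] at hU
  obtain ⟨l, hlW, hlG, hlU⟩ := LinearMap.exists_eqOn_disjoint_ker (G.map p₄)
    ((LinearMap.ker p₁).map p₃) (W.map p₂) (by omega) (p₂ ∘ₗ G.subtype ∘ₗ g)
    (by
      rintro _ ⟨x, rfl⟩
      exact hGW _ (g x).2)
    (by
      rw [Submodule.disjoint_def]
      rintro _ ⟨⟨x, hx, rfl⟩, y, hy, hxy⟩ h0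
      have h2 : p₂ x = 0 := by rw [← hf x hx]; exact h0
      have hy' : p₁ y = 0 := hy
      rw [(hinj x (-y) (by simp [hxy]) (by simp [h2, hy'])).1, map_zero])
  have hker : LinearMap.ker (p₁ - l ∘ₗ p₃) = ⊥ := by
    rw [LinearMap.ker_eq_bot']
    intro y hy
    have hy' : p₁ y = l (p₃ y) := sub_eq_zero.1 hy
    have hy1 : p₁ y = 0 := Submodule.disjoint_def.1 hWcompl.disjoint _
      (by rw [hy']; exact hlW ⟨_, rfl⟩) ⟨y, rfl⟩
    have hy3 : p₃ y = 0 := Submodule.disjoint_def.1 hlU _ ⟨y, hy1, rfl⟩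
      (by rw [LinearMap.mem_ker, ← hy', hy1])
    exact (hinj 0 y (by simp [hy3]) (by simp [hy1])).2
  have hl : finrank K (LinearMap.range l) = finrank K (W.map p₂) := by
    refine le_antisymm (Submodule.finrank_mono hlW) ?_
    have h1 := Submodule.finrank_mono
      (Submodule.map_le_iff_le_comap.2 fun x _ => ⟨x, rfl⟩ :
        ((LinearMap.ker p₁).map p₃).map l ≤ LinearMap.range l)
    have h2 := Submodule.finrank_map_add_finrank_inf_ker l ((LinearMap.ker p₁).map p₃)
    rw [hlU.eq_bot, finrank_bot] at h2
    omega
  have hrho := (p₂ - l ∘ₗ p₄).finrank_range_add_finrank_ker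
  have hupper : finrank K G ≤ finrank K (LinearMap.ker (p₂ - l ∘ₗ p₄)) := by
    refine Submodule.finrank_mono fun x hx => ?_
    rw [LinearMap.mem_ker, LinearMap.sub_apply, LinearMap.comp_apply, hlG _ ⟨x, hx, rfl⟩, hf x hx,
      sub_self]
  have hlower : finrank K (LinearMap.range p₂) ≤
      finrank K (LinearMap.range (p₂ - l ∘ₗ p₄)) + finrank K (LinearMap.range l) := by
    refine le_trans (Submodule.finrank_mono ?_) (Submodule.finrank_add_le_finrank_add_finrank _ _)
    rintro _ ⟨x, rfl⟩
    have : p₂ x = (p₂ - l ∘ₗ p₄) x + l (p₄ x) := by simp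
    rw [this]
    exact Submodule.add_mem_sup ⟨x, rfl⟩ ⟨_, rfl⟩
  have hlower' : Disjoint (LinearMap.ker (p₂ - l ∘ₗ p₄)) (LinearMap.ker p₄) := by
    rw [Submodule.disjoint_def]
    intro x hx h4
    have h4' : p₄ x = 0 := h4
    have h2 : p₂ x = 0 := by simpa [h4'] using hx
    exact (hinj x 0 (by simp [h4']) (by simp [h2])).1
  have hle := Submodule.finrank_add_finrank_le_of_disjoint hlower'
  refine ⟨l, hker, by omega, ?_⟩
  rcases hGfin with h | h <;> omega


/-- Theorem 2 (optimal solution): every invertible blocked matrix `P` admits a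
decomposition (3) with `rank L + r₁ = n` (i.e. `rank L = n - r₁`) and
`rank R + rank L = max (r₂, n + m - r₁ - r₄)`. -/
theorem stmt_1 {K : Type*} [Field K] {m n : ℕ}
    (P₄ : Matrix (Fin m) (Fin m) K) (P₃ : Matrix (Fin m) (Fin n) K)
    (P₂ : Matrix (Fin n) (Fin m) K) (P₁ : Matrix (Fin n) (Fin n) K)
    (hP : IsUnit (Matrix.fromBlocks P₄ P₃ P₂ P₁)) :
    ∃ (L R : Matrix (Fin n) (Fin m) K) (C₄ : Matrix (Fin m) (Fin m) K)
      (C₃ : Matrix (Fin m) (Fin n) K) (C₁ : Matrix (Fin n) (Fin n) K),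
      Matrix.fromBlocks P₄ P₃ P₂ P₁ =
        Matrix.fromBlocks 1 0 L 1 * Matrix.fromBlocks C₄ C₃ 0 C₁ *
          Matrix.fromBlocks 1 0 R 1 ∧
      L.rank + P₁.rank = n ∧
      R.rank + L.rank = max P₂.rank (n + m - P₁.rank - P₄.rank) := by
  have hinj : Function.Injective (Matrix.fromBlocks P₄ P₃ P₂ P₁).mulVec :=
    Matrix.mulVec_injective_iff_isUnit.2 hP
  have hsurj : Function.Surjective (Matrix.fromBlocks P₄ P₃ P₂ P₁).mulVec :=
    Matrix.mulVec_surjective_iff_isUnit.2 hP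
  obtain ⟨l, hker, hl1, hl2⟩ := LinearMap.exists_optimal_block_shear P₄.mulVecLin P₃.mulVecLin
    P₂.mulVecLin P₁.mulVecLin
    (by
      intro x y h1 h2
      have h : Sum.elim x y = 0 := by
        apply hinj
        rw [Matrix.fromBlocks_mulVec, Matrix.mulVec_zero]
        simp only [Matrix.mulVecLin_apply] at h1 h2
        ext (i | i)
        · simpa using congrFun h1 i
        · simpa using congrFun h2 i
      exact ⟨funext fun i => congrFun h (Sum.inl i), funext fun i => congrFun h (Sum.inr i)⟩)
    (by
      intro z
      obtain ⟨v, hv⟩ := hsurj (Sum.elim 0 z)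
      rw [Matrix.fromBlocks_mulVec] at hv
      exact ⟨v ∘ Sum.inl, v ∘ Sum.inr, funext fun i => congrFun hv (Sum.inr i)⟩)
  obtain ⟨L, rfl⟩ := Matrix.toLin'.surjective l
  rw [Matrix.toLin'_apply'] at hker hl1 hl2
  rw [← Matrix.mulVecLin_mul] at hker hl2
  have hsub : ∀ {k : ℕ} (A B : Matrix (Fin n) (Fin k) K),
      A.mulVecLin - B.mulVecLin = (A - B).mulVecLin := fun A B =>
    LinearMap.ext fun x => (Matrix.sub_mulVec A B x).symm
  rw [hsub] at hker hl2
  have hC : IsUnit (P₁ - L * P₃) :=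
    Matrix.mulVec_injective_iff_isUnit.1 (LinearMap.ker_eq_bot.1 hker)
  have hCdet := (Matrix.isUnit_iff_isUnit_det _).1 hC
  refine ⟨L, (P₁ - L * P₃)⁻¹ * (P₂ - L * P₄),
    P₄ - P₃ * ((P₁ - L * P₃)⁻¹ * (P₂ - L * P₄)), P₃, P₁ - L * P₃, ?_, ?_, ?_⟩
  · have h : (P₁ - L * P₃) * ((P₁ - L * P₃)⁻¹ * (P₂ - L * P₄)) = P₂ - L * P₄ :=
      Matrix.mul_nonsing_inv_cancel_left _ _ hCdet
    generalize (P₁ - L * P₃)⁻¹ * (P₂ - L * P₄) = R at h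
    rw [Matrix.sub_mul, sub_eq_iff_eq_add] at h
    simp only [Matrix.fromBlocks_multiply, Matrix.one_mul, Matrix.mul_one, Matrix.zero_mul,
      Matrix.mul_zero, add_zero, zero_add, add_sub_cancel, Matrix.mul_sub,
      Matrix.sub_mul, Matrix.add_mul, h, Matrix.mul_assoc]
    congr 1 <;> abel
  · simpa [Matrix.rank] using hl1
  · rw [Matrix.rank_mul_eq_right_of_isUnit_det _ _ (Matrix.isUnit_nonsing_inv_det _ hCdet)]
    simpa [Matrix.rank] using hl2
end

section
/- Let l and r be natural numbers satisfying l + r₁ ≥ n, r + r₄ ≥ m, and r + l = max(r₂, n + m − r₁ − r₄). Then there exists a decomposition (3) of P with rank L = l and rank R = r. -/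
open Module in
theorem Matrix.rank_add_finrank_ker_mulVecLin {K : Type*} [Field K] {p q : ℕ}
    (A : Matrix (Fin p) (Fin q) K) :
    A.rank + finrank K (LinearMap.ker A.mulVecLin) = q := by
  simpa [Matrix.rank] using LinearMap.finrank_range_add_finrank_ker A.mulVecLin

theorem Matrix.rank_lt_rank_of_ker_lt {K : Type*} [Field K] {p q : ℕ}
    {A B : Matrix (Fin p) (Fin q) K}
    (h : LinearMap.ker A.mulVecLin < LinearMap.ker B.mulVecLin) : B.rank < A.rank := by
  have h1 := Submodule.finrank_lt_finrank_of_lt h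
  have h2 := A.rank_add_finrank_ker_mulVecLin
  have h3 := B.rank_add_finrank_ker_mulVecLin
  omega

theorem Matrix.rank_eq_of_ker_eq_bot {K : Type*} [Field K] {p q : ℕ}
    {A : Matrix (Fin p) (Fin q) K} (h : ∀ x, A.mulVec x = 0 → x = 0) : A.rank = q := by
  have h1 : LinearMap.ker A.mulVecLin = ⊥ := by
    rw [LinearMap.ker_eq_bot']
    exact h
  have h2 := A.rank_add_finrank_ker_mulVecLin
  rw [h1, finrank_bot] at h2
  exact h2

theorem Matrix.rank_add_le_rank_add_rank {K : Type*} [Field K] {p q : ℕ}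
    (A B : Matrix (Fin p) (Fin q) K) : (A + B).rank ≤ A.rank + B.rank := by
  rw [Matrix.rank, Matrix.mulVecLin_add]
  exact (Submodule.finrank_mono (LinearMap.range_add_le _ _)).trans
    (Submodule.finrank_add_le_finrank_add_finrank _ _)

theorem Matrix.isUnit_of_rank_eq {K : Type*} [Field K] {n : ℕ}
    {A : Matrix (Fin n) (Fin n) K} (h : A.rank = n) : IsUnit A := by
  have h2 := A.rank_add_finrank_ker_mulVecLin
  have h3 : LinearMap.ker A.mulVecLin = ⊥ := Submodule.finrank_eq_zero.mp (by omega)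
  rw [← Matrix.mulVec_injective_iff_isUnit]
  exact LinearMap.ker_eq_bot.mp h3

/-- A vector space is not the union of two proper subspaces. -/
theorem Submodule.exists_mem_notMem_notMem {K V : Type*} [Ring K] [AddCommGroup V] [Module K V]
    {S A B : Submodule K V} (hA : ¬ S ≤ A) (hB : ¬ S ≤ B) : ∃ x ∈ S, x ∉ A ∧ x ∉ B := by
  obtain ⟨x, hxS, hxA⟩ := SetLike.not_le_iff_exists.mp hA
  obtain ⟨y, hyS, hyB⟩ := SetLike.not_le_iff_exists.mp hB
  by_cases hxB : x ∈ B
  · by_cases hyA : y ∈ A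
    · exact ⟨x + y, S.add_mem hxS hyS, fun h => hxA ((A.add_mem_iff_left hyA).mp h),
        fun h => hyB ((B.add_mem_iff_right hxB).mp h)⟩
    · exact ⟨y, hyS, hyA, hyB⟩
  · exact ⟨x, hxS, hxA, hxB⟩

theorem exists_dotProduct_eq_neg_one_and_ne_zero {K : Type*} [Field K] {n : ℕ}
    {a b : Fin n → K} (ha : a ≠ 0) (hb : b ≠ 0) : ∃ z, z ⬝ᵥ a = -1 ∧ z ⬝ᵥ b ≠ 0 := by
  have key : ∀ c : Fin n → K, c ≠ 0 →
      ¬ (⊤ : Submodule K (Fin n → K)) ≤ LinearMap.ker (dotProductBilin K K c) := by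
    intro c hc h
    obtain ⟨i, hi⟩ := Function.ne_iff.mp hc
    have := h (Submodule.mem_top (x := Pi.single i 1))
    simp at this
    exact hi this
  obtain ⟨z, -, hza, hzb⟩ := Submodule.exists_mem_notMem_notMem (key a ha) (key b hb)
  simp only [LinearMap.mem_ker, dotProductBilin_apply_apply] at hza hzb
  rw [dotProduct_comm] at hza hzb
  refine ⟨(-(z ⬝ᵥ a)⁻¹) • z, ?_, ?_⟩
  · rw [smul_dotProduct, smul_eq_mul, neg_mul, inv_mul_cancel₀ hza]
  · rw [smul_dotProduct, smul_eq_mul]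
    exact mul_ne_zero (neg_ne_zero.mpr (inv_ne_zero hza)) hzb

section BlockMatrix

open Matrix

variable {K : Type*} [Field K] {m n : ℕ}
  {P₄ : Matrix (Fin m) (Fin m) K} {P₃ : Matrix (Fin m) (Fin n) K}
  {P₂ : Matrix (Fin n) (Fin m) K} {P₁ : Matrix (Fin n) (Fin n) K}

theorem Matrix.vecMulVec_mulVec_eq_smul {p q : ℕ} (u : Fin p → K) (v x : Fin q → K) :
    vecMulVec u v *ᵥ x = (v ⬝ᵥ x) • u := by
  rw [vecMulVec_mulVec]
  ext i
  simp [mul_comm]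

theorem Matrix.sub_vecMulVec_mul_mulVec {p q s : ℕ} (A : Matrix (Fin p) (Fin q) K)
    (B : Matrix (Fin s) (Fin q) K) (u : Fin p → K) (v : Fin s → K) (x : Fin q → K) :
    (A - vecMulVec u v * B) *ᵥ x = A *ᵥ x - (v ⬝ᵥ B *ᵥ x) • u := by
  rw [sub_mulVec, ← mulVec_mulVec, vecMulVec_mulVec_eq_smul]

/-- A rank-one update along a vector outside the column space raises the rank. -/
theorem Matrix.rank_lt_rank_sub_vecMulVec_mul {p q s : ℕ} {A : Matrix (Fin p) (Fin q) K}
    {B : Matrix (Fin s) (Fin q) K} {u : Fin p → K} {v : Fin s → K} {k : Fin q → K}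
    (hu : u ∉ LinearMap.range A.mulVecLin) (hk : A *ᵥ k = 0) (hv : v ⬝ᵥ B *ᵥ k ≠ 0) :
    A.rank < (A - vecMulVec u v * B).rank := by
  have hu0 : u ≠ 0 := fun h => hu (h ▸ Submodule.zero_mem _)
  apply rank_lt_rank_of_ker_lt
  rw [SetLike.lt_iff_le_and_exists]
  refine ⟨fun x hx => ?_, k, hk, fun h => ?_⟩
  · simp only [LinearMap.mem_ker, mulVecLin_apply, sub_vecMulVec_mul_mulVec] at hx ⊢
    by_cases hc : v ⬝ᵥ B *ᵥ x = 0
    · simpa [hc] using hx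
    · refine absurd ⟨(v ⬝ᵥ B *ᵥ x)⁻¹ • x, ?_⟩ hu
      rw [mulVecLin_apply, mulVec_smul, sub_eq_zero.mp hx, smul_smul, inv_mul_cancel₀ hc, one_smul]
  · simp only [LinearMap.mem_ker, mulVecLin_apply, sub_vecMulVec_mul_mulVec, hk, zero_sub,
      neg_eq_zero, smul_eq_zero] at h
    exact h.elim hv hu0

theorem exists_mulVec_add_mulVec_eq_of_isUnit_fromBlocks (hP : IsUnit (fromBlocks P₄ P₃ P₂ P₁))
    (u : Fin n → K) : ∃ y k, P₂ *ᵥ y + P₁ *ᵥ k = u := by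
  obtain ⟨x, hx⟩ := (mulVec_surjective_iff_isUnit.mpr hP) (Sum.elim 0 u)
  rw [fromBlocks_mulVec] at hx
  refine ⟨x ∘ Sum.inl, x ∘ Sum.inr, ?_⟩
  ext i
  simpa using congrFun hx (Sum.inr i)

theorem eq_zero_of_isUnit_fromBlocks (hP : IsUnit (fromBlocks P₄ P₃ P₂ P₁))
    {k : Fin n → K} (h3 : P₃ *ᵥ k = 0) (h1 : P₁ *ᵥ k = 0) : k = 0 := by
  have h : Sum.elim (0 : Fin m → K) k = 0 := by
    apply mulVec_injective_iff_isUnit.mpr hP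
    simp [fromBlocks_mulVec, h3, h1]
  ext i
  simpa using congrFun h (Sum.inr i)

theorem not_range_le_range_of_isUnit_fromBlocks (hP : IsUnit (fromBlocks P₄ P₃ P₂ P₁))
    (h : P₁.rank < n) : ¬ LinearMap.range P₂.mulVecLin ≤ LinearMap.range P₁.mulVecLin := by
  intro hle
  have htop : LinearMap.range P₁.mulVecLin = ⊤ := by
    rw [eq_top_iff]
    intro u _
    obtain ⟨y, k, rfl⟩ := exists_mulVec_add_mulVec_eq_of_isUnit_fromBlocks hP u
    exact Submodule.add_mem _ (hle ⟨y, rfl⟩) ⟨k, rfl⟩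
  rw [Matrix.rank, htop, finrank_top] at h
  simp at h

theorem exists_ne_zero_mulVec_eq_zero_of_rank_lt (h : P₁.rank < n) :
    ∃ k, k ≠ 0 ∧ P₁ *ᵥ k = 0 := by
  by_contra! hc
  exact h.ne (rank_eq_of_ker_eq_bot fun x hx => by_contra fun h0 => hc x h0 hx)

/-- If `P₁` is singular, a rank-one row operation raises its rank without raising that of `P₂`. -/
theorem exists_vecMulVec_rank_lt_and_rank_le (hP : IsUnit (fromBlocks P₄ P₃ P₂ P₁))
    (h : P₁.rank < n) : ∃ (u : Fin n → K) (v : Fin m → K),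
      P₁.rank < (P₁ - vecMulVec u v * P₃).rank ∧ (P₂ - vecMulVec u v * P₄).rank ≤ P₂.rank := by
  obtain ⟨_, ⟨y, rfl⟩, hu⟩ :=
    SetLike.not_le_iff_exists.mp (not_range_le_range_of_isUnit_fromBlocks hP h)
  obtain ⟨k, hk0, hk⟩ := exists_ne_zero_mulVec_eq_zero_of_rank_lt h
  have h3 : P₃ *ᵥ k ≠ 0 := fun h3 => hk0 (eq_zero_of_isUnit_fromBlocks hP h3 hk)
  obtain ⟨v, -, hv⟩ := exists_dotProduct_eq_neg_one_and_ne_zero h3 h3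
  refine ⟨P₂ *ᵥ y, v, rank_lt_rank_sub_vecMulVec_mul hu hk hv, ?_⟩
  have : P₂ - vecMulVec (P₂ *ᵥ y) v * P₄ = P₂ * (1 - vecMulVec y v * P₄) := by
    rw [Matrix.mul_sub, Matrix.mul_one, ← Matrix.mul_assoc, mul_vecMulVec]
  rw [this]
  exact rank_mul_le_left _ _

theorem exists_vecMul_eq_and_dotProduct_eq_one (hP : IsUnit (fromBlocks P₄ P₃ P₂ P₁))
    {u k : Fin n → K} (hu : u ∉ (LinearMap.ker P₄.mulVecLin).map P₂.mulVecLin) (hk : k ≠ 0) :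
    ∃ (v : Fin m → K) (w : Fin n → K), v ᵥ* P₄ = w ᵥ* P₂ ∧ w ⬝ᵥ u = 1 ∧
      v ⬝ᵥ P₃ *ᵥ k ≠ w ⬝ᵥ P₁ *ᵥ k := by
  obtain ⟨x, hx⟩ := (mulVec_surjective_iff_isUnit.mpr hP) (Sum.elim 0 u)
  have hq : x ∘ Sum.inr ≠ 0 := by
    intro h0
    rw [fromBlocks_mulVec, h0, mulVec_zero, mulVec_zero, add_zero, add_zero] at hx
    refine hu ⟨x ∘ Sum.inl, ?_, ?_⟩
    · ext i
      simpa using congrFun hx (Sum.inl i)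
    · ext i
      simpa using congrFun hx (Sum.inr i)
  obtain ⟨z, hzq, hzk⟩ := exists_dotProduct_eq_neg_one_and_ne_zero hq hk
  obtain ⟨t, ht⟩ := (vecMul_surjective_iff_isUnit.mpr hP) (Sum.elim (0 : Fin m → K) z)
  have hw : (t ∘ Sum.inr) ⬝ᵥ u = -1 := by
    have h1 : t ⬝ᵥ Sum.elim (0 : Fin m → K) u = Sum.elim (0 : Fin m → K) z ⬝ᵥ x := by
      rw [← hx, dotProduct_mulVec]
      exact congrArg (· ⬝ᵥ x) ht
    simpa [dotProduct, ← hzq] using h1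
  replace ht : t ᵥ* fromBlocks P₄ P₃ P₂ P₁ = Sum.elim (0 : Fin m → K) z := ht
  rw [vecMul_fromBlocks] at ht
  refine ⟨t ∘ Sum.inl, -(t ∘ Sum.inr), ?_, by rw [neg_dotProduct, hw, neg_neg], ?_⟩
  · rw [neg_vecMul, ← add_eq_zero_iff_eq_neg]
    ext i
    simpa using congrFun ht (Sum.inl i)
  · rw [neg_dotProduct, ne_eq, ← add_eq_zero_iff_eq_neg, dotProduct_mulVec, dotProduct_mulVec,
      ← add_dotProduct]
    have hz : t ∘ Sum.inl ᵥ* P₃ + t ∘ Sum.inr ᵥ* P₁ = z := by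
      ext i
      simpa using congrFun ht (Sum.inr i)
    rwa [hz]

theorem rank_sub_vecMulVec_mul_lt {y v : Fin m → K} {w : Fin n → K}
    (hvw : v ᵥ* P₄ = w ᵥ* P₂) (hw : w ⬝ᵥ P₂ *ᵥ y = 1) :
    (P₂ - vecMulVec (P₂ *ᵥ y) v * P₄).rank < P₂.rank := by
  have key : ∀ x, (P₂ - vecMulVec (P₂ *ᵥ y) v * P₄) *ᵥ x =
      P₂ *ᵥ x - (w ⬝ᵥ P₂ *ᵥ x) • P₂ *ᵥ y := by
    intro x
    rw [sub_vecMulVec_mul_mulVec, dotProduct_mulVec v, hvw, ← dotProduct_mulVec]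
  apply rank_lt_rank_of_ker_lt
  rw [SetLike.lt_iff_le_and_exists]
  refine ⟨fun x hx => ?_, y, ?_, fun h => ?_⟩
  · simp only [LinearMap.mem_ker, mulVecLin_apply] at hx ⊢
    rw [key, hx]
    simp
  · rw [LinearMap.mem_ker, mulVecLin_apply, key, hw, one_smul, sub_self]
  · rw [LinearMap.mem_ker, mulVecLin_apply] at h
    rw [h, dotProduct_zero] at hw
    exact zero_ne_one hw

/-- A rank-one row operation lowers the rank of `P₂` while raising that of `P₁`, unless `P₁`
already has full rank and keeps it. -/
theorem exists_vecMulVec_rank_lt_and_rank_lt (hP : IsUnit (fromBlocks P₄ P₃ P₂ P₁))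
    (h : m < P₂.rank + P₄.rank) : ∃ (u : Fin n → K) (v : Fin m → K),
      min n (P₁.rank + 1) ≤ (P₁ - vecMulVec u v * P₃).rank ∧
        (P₂ - vecMulVec u v * P₄).rank < P₂.rank := by
  have hker : ¬ LinearMap.range P₂.mulVecLin ≤
      (LinearMap.ker P₄.mulVecLin).map P₂.mulVecLin := by
    intro hle
    have h1 := Submodule.finrank_mono hle
    have h2 := Submodule.finrank_map_le P₂.mulVecLin (LinearMap.ker P₄.mulVecLin)
    have h3 := P₄.rank_add_finrank_ker_mulVecLin
    rw [← Matrix.rank] at h1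
    omega
  by_cases h1 : P₁.rank < n
  · obtain ⟨_, ⟨y, rfl⟩, hu, hu1⟩ := Submodule.exists_mem_notMem_notMem hker
      (not_range_le_range_of_isUnit_fromBlocks hP h1)
    obtain ⟨k, hk0, hk⟩ := exists_ne_zero_mulVec_eq_zero_of_rank_lt h1
    obtain ⟨v, w, hvw, hw, hv⟩ := exists_vecMul_eq_and_dotProduct_eq_one hP hu hk0
    rw [hk, dotProduct_zero] at hv
    exact ⟨P₂ *ᵥ y, v, (min_le_right _ _).trans (rank_lt_rank_sub_vecMulVec_mul hu1 hk hv),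
      rank_sub_vecMulVec_mul_lt hvw hw⟩
  · have hunit : IsUnit P₁ := isUnit_of_rank_eq (le_antisymm P₁.rank_le_height (not_lt.mp h1))
    obtain ⟨_, ⟨y, rfl⟩, hu⟩ := SetLike.not_le_iff_exists.mp hker
    obtain ⟨k, hk⟩ := (mulVec_surjective_iff_isUnit.mpr hunit) (P₂ *ᵥ y)
    have hk0 : k ≠ 0 := by
      rintro rfl
      apply hu
      rw [mulVecLin_apply, ← hk, mulVec_zero]
      exact Submodule.zero_mem _
    obtain ⟨v, w, hvw, hw, hv⟩ := exists_vecMul_eq_and_dotProduct_eq_one hP hu hk0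
    rw [mulVecLin_apply] at hw
    rw [hk, hw] at hv
    refine ⟨P₂ *ᵥ y, v, (min_le_left _ _).trans (rank_eq_of_ker_eq_bot fun x hx => ?_).ge,
      rank_sub_vecMulVec_mul_lt hvw hw⟩
    rw [sub_vecMulVec_mul_mulVec, ← hk, ← mulVec_smul, ← mulVec_sub] at hx
    have hinj := mulVec_injective_iff_isUnit.mpr hunit
    have hx' : x = (v ⬝ᵥ P₃ *ᵥ x) • k :=
      sub_eq_zero.mp (hinj (hx.trans (mulVec_zero P₁).symm))
    have hc : (v ⬝ᵥ P₃ *ᵥ x) * (v ⬝ᵥ P₃ *ᵥ k - 1) = 0 := by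
      have h2 : v ⬝ᵥ P₃ *ᵥ x = (v ⬝ᵥ P₃ *ᵥ x) * (v ⬝ᵥ P₃ *ᵥ k) := by
        conv_lhs => rw [hx', mulVec_smul, dotProduct_smul, smul_eq_mul]
      rw [mul_sub, ← h2, mul_one, sub_self]
    rcases mul_eq_zero.mp hc with h0 | h0
    · rw [hx', h0, zero_smul]
    · exact absurd (sub_eq_zero.mp h0) hv

theorem isUnit_fromBlocks_sub_mul (hP : IsUnit (fromBlocks P₄ P₃ P₂ P₁))
    (L : Matrix (Fin n) (Fin m) K) :
    IsUnit (fromBlocks P₄ P₃ (P₂ - L * P₄) (P₁ - L * P₃)) := by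
  have h : fromBlocks P₄ P₃ (P₂ - L * P₄) (P₁ - L * P₃) =
      fromBlocks 1 0 (-L) 1 * fromBlocks P₄ P₃ P₂ P₁ := by
    simp [fromBlocks_multiply, sub_eq_neg_add]
  rw [h]
  refine IsUnit.mul ?_ hP
  rw [isUnit_iff_isUnit_det, det_fromBlocks_zero₁₂]
  simp

theorem exists_rank_le_and_isUnit_sub_mul_and_rank_le (r : ℕ) (hr : m ≤ r + P₄.rank) (l : ℕ) :
    ∀ (P₂ : Matrix (Fin n) (Fin m) K) (P₁ : Matrix (Fin n) (Fin n) K),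
      IsUnit (fromBlocks P₄ P₃ P₂ P₁) → n ≤ l + P₁.rank → P₂.rank ≤ l + r →
      ∃ L : Matrix (Fin n) (Fin m) K, L.rank ≤ l ∧ IsUnit (P₁ - L * P₃) ∧
        (P₂ - L * P₄).rank ≤ r := by
  induction l with
  | zero =>
    intro P₂ P₁ _ hl h2
    refine ⟨0, by simp, ?_, by simpa using h2⟩
    rw [Matrix.zero_mul, sub_zero]
    exact isUnit_of_rank_eq (le_antisymm P₁.rank_le_height (by omega))
  | succ l ih =>
    intro P₂ P₁ hP hl h2
    obtain ⟨u, v, h1', h2'⟩ : ∃ (u : Fin n → K) (v : Fin m → K),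
        n ≤ l + (P₁ - vecMulVec u v * P₃).rank ∧
        (P₂ - vecMulVec u v * P₄).rank ≤ l + r := by
      by_cases htight : P₂.rank = l + 1 + r
      · obtain ⟨u, v, h1', h2'⟩ := exists_vecMulVec_rank_lt_and_rank_lt hP (by omega)
        exact ⟨u, v, by omega, by omega⟩
      · by_cases h1 : P₁.rank < n
        · obtain ⟨u, v, h1', h2'⟩ := exists_vecMulVec_rank_lt_and_rank_le hP h1
          exact ⟨u, v, by omega, by omega⟩
        · refine ⟨0, 0, ?_, ?_⟩
          · simp only [zero_vecMulVec, Matrix.zero_mul, sub_zero]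
            omega
          · simp only [zero_vecMulVec, Matrix.zero_mul, sub_zero]
            omega
    obtain ⟨L, hL, hL1, hL2⟩ := ih _ _ (isUnit_fromBlocks_sub_mul hP (vecMulVec u v)) h1' h2'
    refine ⟨vecMulVec u v + L, ?_, ?_, ?_⟩
    · have h3 := Matrix.rank_add_le_rank_add_rank (vecMulVec u v) L
      have h4 := rank_vecMulVec_le u v
      omega
    · rwa [Matrix.add_mul, ← sub_sub]
    · rwa [Matrix.add_mul, ← sub_sub]

end BlockMatrix

/-- Theorem 3 (flexibility): if `l + r₁ ≥ n`, `r + r₄ ≥ m` and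
`r + l = max (r₂, n + m - r₁ - r₄)`, then `P` admits a decomposition (3)
with `rank L = l` and `rank R = r`. -/
theorem stmt_2 {K : Type*} [Field K] {m n : ℕ}
    (P₄ : Matrix (Fin m) (Fin m) K) (P₃ : Matrix (Fin m) (Fin n) K)
    (P₂ : Matrix (Fin n) (Fin m) K) (P₁ : Matrix (Fin n) (Fin n) K)
    (hP : IsUnit (Matrix.fromBlocks P₄ P₃ P₂ P₁))
    (l r : ℕ) (hl : l + P₁.rank ≥ n) (hr : r + P₄.rank ≥ m)
    (hrl : r + l = max P₂.rank (n + m - P₁.rank - P₄.rank)) :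
    ∃ (L R : Matrix (Fin n) (Fin m) K) (C₄ : Matrix (Fin m) (Fin m) K)
      (C₃ : Matrix (Fin m) (Fin n) K) (C₁ : Matrix (Fin n) (Fin n) K),
      Matrix.fromBlocks P₄ P₃ P₂ P₁ =
        Matrix.fromBlocks 1 0 L 1 * Matrix.fromBlocks C₄ C₃ 0 C₁ *
          Matrix.fromBlocks 1 0 R 1 ∧
      L.rank = l ∧ R.rank = r := by
  obtain ⟨L, hL, hC₁, hA⟩ :=
    exists_rank_le_and_isUnit_sub_mul_and_rank_le r hr l P₂ P₁ hP hl (by omega)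
  obtain ⟨R, hR⟩ : ∃ R, (P₁ - L * P₃) * R = P₂ - L * P₄ :=
    ⟨(P₁ - L * P₃)⁻¹ * (P₂ - L * P₄),
      Matrix.mul_nonsing_inv_cancel_left _ _ ((Matrix.isUnit_iff_isUnit_det _).mp hC₁)⟩
  have hRr : R.rank ≤ r := by
    rwa [← hR, Matrix.rank_mul_eq_right_of_isUnit_det _ _
      ((Matrix.isUnit_iff_isUnit_det _).mp hC₁)] at hA
  have hdec : Matrix.fromBlocks P₄ P₃ P₂ P₁ =
      Matrix.fromBlocks 1 0 L 1 * Matrix.fromBlocks (P₄ - P₃ * R) P₃ 0 (P₁ - L * P₃) *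
        Matrix.fromBlocks 1 0 R 1 := by
    have h2 : P₂ = L * (P₄ - P₃ * R) + (L * P₃ + (P₁ - L * P₃)) * R := by
      rw [Matrix.add_mul, hR, Matrix.mul_sub, Matrix.mul_assoc]
      abel
    rw [add_sub_cancel] at h2
    simp [Matrix.fromBlocks_multiply, ← h2]
  have hC₄ : IsUnit (P₄ - P₃ * R) := by
    have h := (Matrix.isUnit_iff_isUnit_det _).mp hP
    rw [hdec, Matrix.det_mul, Matrix.det_mul, Matrix.det_fromBlocks_zero₂₁] at h
    rw [Matrix.isUnit_iff_isUnit_det]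
    exact isUnit_of_mul_isUnit_left
      (isUnit_of_mul_isUnit_right (isUnit_of_mul_isUnit_left h))
  have hL' : n ≤ P₁.rank + L.rank := by
    have h1 := Matrix.rank_add_le_rank_add_rank P₁ (L * -P₃)
    have h2 := Matrix.rank_mul_le_left L (-P₃)
    rw [Matrix.mul_neg, ← sub_eq_add_neg, Matrix.rank_of_isUnit _ hC₁, Fintype.card_fin] at h1
    rw [Matrix.mul_neg] at h2
    omega
  have hR' : m ≤ P₄.rank + R.rank := by
    have h1 := Matrix.rank_add_le_rank_add_rank P₄ (-P₃ * R)
    have h2 := Matrix.rank_mul_le_right (-P₃) R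
    rw [Matrix.neg_mul, ← sub_eq_add_neg, Matrix.rank_of_isUnit _ hC₄, Fintype.card_fin] at h1
    rw [Matrix.neg_mul] at h2
    omega
  have hLR : P₂.rank ≤ L.rank + R.rank := by
    have h1 := Matrix.rank_add_le_rank_add_rank (L * P₄) ((P₁ - L * P₃) * R)
    have h2 := Matrix.rank_mul_le_left L P₄
    have h3 := Matrix.rank_mul_le_right (P₁ - L * P₃) R
    rw [hR, add_sub_cancel] at h1
    rw [hR] at h3
    omega
  exact ⟨L, R, _, _, _, hdec, by omega, by omega⟩
end
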